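/- arXiv:1505.06536 — 7 statements merged into one kernel-verified Lean document; each statement's English description precedes it below -/
import Mathlib

section
/- Let m, n ≥ 2. The map sending a pair (t, b) ∈ T_n × V to the m×n matrix a with entries a_{ij} = t_j · b_{ij} is a bijection from T_n × V onto 𝒴^{(0)}. -/
lemma rank_col_rescale {m n : ℕ} (t : Fin n → ℂ) (ht : ∀ j, t j ≠ 0)
    (b : Matrix (Fin m) (Fin n) ℂ) :
    (Matrix.of fun i j => t j * b i j).rank = b.rank := by
  have h : (Matrix.of fun i j => t j * b i j) = b * Matrix.diagonal t := by
    ext i j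
    simp [Matrix.mul_diagonal, mul_comm]
  rw [h]
  apply Matrix.rank_mul_eq_left_of_isUnit_det
  rw [Matrix.det_diagonal]
  exact isUnit_iff_ne_zero.mpr (Finset.prod_ne_zero_iff.mpr fun j _ => ht j)

/-- Column rescaling gives a bijection `T_n × V ≃ 𝒴⁽⁰⁾`, where `T_n` is the set of
`n`-tuples of nonzero complex numbers summing to `1`, `V` is the set of `m × n` rank-2
matrices with nonzero entries and all column sums equal to `1`, and `𝒴⁽⁰⁾` is the set of
`m × n` rank-2 matrices with nonzero entries, total entry sum `1`, and all column sums
nonzero. -/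
theorem column_rescaling_bijection (m n : ℕ) (hm : 2 ≤ m) (hn : 2 ≤ n)
    (T : Set (Fin n → ℂ))
    (hT : T = {t : Fin n → ℂ | (∀ j, t j ≠ 0) ∧ ∑ j, t j = 1})
    (V : Set (Matrix (Fin m) (Fin n) ℂ))
    (hV : V = {b : Matrix (Fin m) (Fin n) ℂ | (∀ i j, b i j ≠ 0) ∧
      (∀ j, ∑ i, b i j = 1) ∧ b.rank = 2})
    (Y0 : Set (Matrix (Fin m) (Fin n) ℂ))
    (hY0 : Y0 = {a : Matrix (Fin m) (Fin n) ℂ | (∀ i j, a i j ≠ 0) ∧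
      (∑ i, ∑ j, a i j) = 1 ∧ a.rank = 2 ∧ ∀ j, ∑ i, a i j ≠ 0}) :
    Set.BijOn
      (fun p : (Fin n → ℂ) × Matrix (Fin m) (Fin n) ℂ =>
        Matrix.of fun i j => p.1 j * p.2 i j)
      (T ×ˢ V) Y0 := by
  subst hT hV hY0
  refine ⟨?_, ?_, ?_⟩
  · rintro ⟨t, b⟩ ⟨⟨ht, hts⟩, hb, hbs, hr⟩
    dsimp only at ht hts hb hbs hr
    refine ⟨fun i j => mul_ne_zero (ht j) (hb i j), ?_, ?_, ?_⟩
    · change ∑ i, ∑ j, t j * b i j = 1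
      rw [Finset.sum_comm]
      simp [← Finset.mul_sum, hbs, hts]
    · exact (rank_col_rescale t ht b).trans hr
    · intro j
      simp [← Finset.mul_sum, hbs, ht]
  · rintro ⟨t, b⟩ ⟨⟨ht, hts⟩, hb, hbs, hr⟩ ⟨t', b'⟩ ⟨⟨ht', hts'⟩, hb', hbs', hr'⟩ h
    dsimp only at ht hts hb hbs hr ht' hts' hb' hbs' hr' h
    have e : ∀ i j, t j * b i j = t' j * b' i j := fun i j => congrFun (congrFun h i) j
    have et : t = t' := by
      ext j
      have := Finset.sum_congr (rfl : (Finset.univ : Finset (Fin m)) = _) fun i _ => e i j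
      simpa [← Finset.mul_sum, hbs, hbs'] using this
    subst et
    refine Prod.ext rfl ?_
    ext i j
    exact mul_left_cancel₀ (ht j) (e i j)
  · rintro a ⟨ha, has, hr, hc⟩
    have hc' : ∀ j, (∑ i, a i j)⁻¹ ≠ 0 := fun j => inv_ne_zero (hc j)
    refine ⟨(fun j => ∑ i, a i j, Matrix.of fun i j => (∑ i, a i j)⁻¹ * a i j),
      ⟨⟨hc, ?_⟩, ?_, ?_, ?_⟩, ?_⟩
    · exact Finset.sum_comm.trans has
    · exact fun i j => mul_ne_zero (hc' j) (ha i j)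
    · intro j
      simp only [Matrix.of_apply, ← Finset.mul_sum]
      exact inv_mul_cancel₀ (hc j)
    · exact (rank_col_rescale _ hc' a).trans hr
    · ext i j
      exact mul_inv_cancel_left₀ (hc j) _
end

section
/- Let m, n ≥ 2. For a ∈ 𝒴 and t ∈ ℂ with t ≠ 0, let t·a be the m×n matrix whose (i,j)-entry is a_{ij} if the j-th column sum of a is nonzero, and t·a_{ij} if the j-th column sum of a is zero. Then: (i) t·a ∈ 𝒴; (ii) for each j, the j-th column sum of t·a is zero if and only if the j-th column sum of a is zero, so each 𝒴^{(l)} is preserved; (iii) this defines a group action of the multiplicative group ℂ∖{0} on 𝒴, i.e., 1·a = a and s·(t·a) = (st)·a; and (iv) if a has at least one column whose entries sum to zero and t·a = a, then t = 1. -/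
/-- The `ℂ*`-action on `𝒴` that rescales exactly the columns with zero column sum:
it preserves `𝒴`, preserves the zero-column-sum pattern (hence each stratum `𝒴⁽ˡ⁾`),
is a genuine group action, and acts freely on matrices having at least one column with
zero sum. -/
theorem torus_action_on_Y (m n : ℕ) (hm : 2 ≤ m) (hn : 2 ≤ n)
    (Y : Set (Matrix (Fin m) (Fin n) ℂ))
    (hY : Y = {a : Matrix (Fin m) (Fin n) ℂ | (∀ i j, a i j ≠ 0) ∧
      (∑ i, ∑ j, a i j) = 1 ∧ a.rank = 2})
    (smul : ℂ → Matrix (Fin m) (Fin n) ℂ → Matrix (Fin m) (Fin n) ℂ)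
    (hsmul : ∀ t a, smul t a =
      Matrix.of fun i j => if (∑ i', a i' j) = 0 then t * a i j else a i j) :
    ∀ a ∈ Y, ∀ t : ℂ, t ≠ 0 →
      (smul t a ∈ Y) ∧
      (∀ j, (∑ i, (smul t a) i j = 0) ↔ (∑ i, a i j = 0)) ∧
      (∀ l : ℕ, {j | ∑ i, (smul t a) i j = 0}.ncard = l ↔ {j | ∑ i, a i j = 0}.ncard = l) ∧
      (smul 1 a = a) ∧
      (∀ s : ℂ, s ≠ 0 → smul s (smul t a) = smul (s * t) a) ∧
      ((∃ j, ∑ i, a i j = 0) → smul t a = a → t = 1) := by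
  classical
  intro a ha t ht
  have hcol : ∀ j, ∑ i, (smul t a) i j = ∑ i, a i j := by
    intro j
    rw [hsmul]
    by_cases h : (∑ i', a i' j) = 0
    · simp only [Matrix.of_apply, h, if_true, ← Finset.mul_sum, mul_zero]
    · simp only [Matrix.of_apply, if_neg h]
  have hiff : ∀ j, (∑ i, (smul t a) i j = 0) ↔ (∑ i, a i j = 0) := fun j => by rw [hcol]
  rw [hY] at ha
  obtain ⟨h0, h1, h2⟩ := ha
  refine ⟨?_, hiff, ?_, ?_, ?_, ?_⟩
  · rw [hY]
    refine ⟨?_, ?_, ?_⟩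
    · intro i j
      rw [hsmul, Matrix.of_apply]
      split_ifs
      · exact mul_ne_zero ht (h0 i j)
      · exact h0 i j
    · calc ∑ i, ∑ j, smul t a i j = ∑ j, ∑ i, smul t a i j := Finset.sum_comm
        _ = ∑ j, ∑ i, a i j := Finset.sum_congr rfl fun j _ => hcol j
        _ = ∑ i, ∑ j, a i j := Finset.sum_comm
        _ = 1 := h1
    · have e : smul t a = a * Matrix.diagonal
          (fun j => if (∑ i', a i' j) = 0 then t else 1) := by
        ext i j
        rw [hsmul, Matrix.of_apply, Matrix.mul_diagonal]
        split_ifs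
        · ring
        · ring
      rw [e, Matrix.rank_mul_eq_left_of_isUnit_det, h2]
      rw [Matrix.det_diagonal, isUnit_iff_ne_zero, Finset.prod_ne_zero_iff]
      intro j _
      split_ifs
      · exact ht
      · exact one_ne_zero
  · intro l
    simp only [hcol]
  · ext i j
    simp [hsmul]
  · intro s _
    ext i j
    rw [hsmul s, Matrix.of_apply, hcol, hsmul t, hsmul (s * t), Matrix.of_apply, Matrix.of_apply]
    split_ifs
    · ring
    · rfl
  · rintro ⟨j, hj⟩ h
    have := congrFun (congrFun h ⟨0, by omega⟩) j
    rw [hsmul, Matrix.of_apply, if_pos hj] at this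
    exact mul_right_cancel₀ (h0 _ _) (this.trans (one_mul _).symm)
end

section
/- Let m ≥ 2 and l ≥ 3. The map sending a tuple (A₁, …, A_{l−2}) of matrices in W₃ that all have the same first two columns b₁, b₂ to the m×l matrix whose first two columns are b₁, b₂ and whose (k+2)-nd column is the third column of A_k (for 1 ≤ k ≤ l−2) is a bijection from {(A₁, …, A_{l−2}) ∈ (W₃)^{l−2} : the first two columns of A₁, …, A_{l−2} all coincide} onto W_l. In other words, W_l is the (l−2)-fold fiber product of W₃ over W₂ with respect to the projections forgetting the third column. -/
theorem rank_two_iff_aux {m n : ℕ} (c : Matrix (Fin m) (Fin n) ℂ) (a b : Fin n)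
    (h : LinearIndependent ℂ ![fun i => c i a, fun i => c i b]) :
    c.rank = 2 ↔ ∀ j, (fun i => c i j) ∈
      Submodule.span ℂ (Set.range ![fun i => c i a, fun i => c i b]) := by
  have h2 := finrank_span_eq_card h
  rw [Fintype.card_fin] at h2
  have hle : Submodule.span ℂ (Set.range ![fun i => c i a, fun i => c i b]) ≤
      Submodule.span ℂ (Set.range c.col) := by
    apply Submodule.span_mono
    rintro _ ⟨x, rfl⟩
    fin_cases x
    · exact ⟨a, rfl⟩
    · exact ⟨b, rfl⟩
  rw [Matrix.rank_eq_finrank_span_cols]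
  constructor
  · intro hr j
    rw [Submodule.eq_of_le_of_finrank_eq hle (by rw [h2, hr])]
    exact Submodule.subset_span ⟨j, rfl⟩
  · intro hj
    have : Submodule.span ℂ (Set.range c.col) ≤
        Submodule.span ℂ (Set.range ![fun i => c i a, fun i => c i b]) := by
      rw [Submodule.span_le]
      rintro _ ⟨j, rfl⟩
      exact hj j
    rw [le_antisymm this hle, h2]

/-- `W_l` is the `(l-2)`-fold fiber product of `W₃` over `W₂`: gluing the third columns
of `l - 2` matrices in `W₃` sharing the same first two columns is a bijection onto
`W_l`.  Here `W_l` is the set of `m × l` matrices with nonzero entries, all column sums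
`1`, rank `2`, and linearly independent first two columns. -/
theorem W_l_fiber_product (m l : ℕ) (hm : 2 ≤ m) (hl : 3 ≤ l)
    (W3 : Set (Matrix (Fin m) (Fin 3) ℂ))
    (hW3 : W3 = {c : Matrix (Fin m) (Fin 3) ℂ | (∀ i k, c i k ≠ 0) ∧
      (∀ k, ∑ i, c i k = 1) ∧ c.rank = 2 ∧
      LinearIndependent ℂ ![fun i => c i 0, fun i => c i 1]})
    (Wl : Set (Matrix (Fin m) (Fin l) ℂ))
    (hWl : Wl = {c : Matrix (Fin m) (Fin l) ℂ | (∀ i k, c i k ≠ 0) ∧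
      (∀ k, ∑ i, c i k = 1) ∧ c.rank = 2 ∧
      LinearIndependent ℂ ![fun i => c i ⟨0, by omega⟩, fun i => c i ⟨1, by omega⟩]}) :
    Set.BijOn
      (fun A : Fin (l - 2) → Matrix (Fin m) (Fin 3) ℂ =>
        Matrix.of fun i (j : Fin l) =>
          if h0 : j.val = 0 then A ⟨0, by omega⟩ i 0
          else if h1 : j.val = 1 then A ⟨0, by omega⟩ i 1
          else A ⟨j.val - 2, by have := j.isLt; omega⟩ i 2)
      {A : Fin (l - 2) → Matrix (Fin m) (Fin 3) ℂ |
        (∀ k, A k ∈ W3) ∧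
        ∀ k k' : Fin (l - 2), ∀ i, A k i 0 = A k' i 0 ∧ A k i 1 = A k' i 1}
      Wl := by
  subst hW3 hWl
  refine ⟨?_, ?_, ?_⟩
  · rintro A ⟨hA, hAA⟩
    have hLI := (hA ⟨0, by omega⟩).2.2.2
    refine ⟨?_, ?_, ?_, ?_⟩
    · intro i j
      simp only [Matrix.of_apply]
      split_ifs
      · exact (hA _).1 _ _
      · exact (hA _).1 _ _
      · exact (hA _).1 _ _
    · intro j
      simp only [Matrix.of_apply]
      split_ifs
      · exact (hA _).2.1 _
      · exact (hA _).2.1 _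
      · exact (hA _).2.1 _
    · rw [rank_two_iff_aux _ ⟨0, by omega⟩ ⟨1, by omega⟩ (by simpa using hLI)]
      intro j
      have key : ∀ k : Fin (l - 2), ∀ j, (fun i => A k i j) ∈ Submodule.span ℂ
          (Set.range ![fun i => A ⟨0, by omega⟩ i 0, fun i => A ⟨0, by omega⟩ i 1]) := by
        intro k j
        have := (rank_two_iff_aux _ 0 1 (hA k).2.2.2).1 (hA k).2.2.1 j
        have e0 : (fun i => A k i 0) = fun i => A ⟨0, by omega⟩ i 0 :=
          funext fun i => (hAA _ _ i).1
        have e1 : (fun i => A k i 1) = fun i => A ⟨0, by omega⟩ i 1 :=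
          funext fun i => (hAA _ _ i).2
        rwa [e0, e1] at this
      simp only [Matrix.of_apply]
      by_cases h0 : j.val = 0
      · simpa [h0] using key ⟨0, by omega⟩ 0
      · by_cases h1 : j.val = 1
        · simpa [h1] using key ⟨0, by omega⟩ 1
        · simpa [h0, h1] using key ⟨j.val - 2, by omega⟩ 2
    · simpa using hLI
  · rintro A ⟨hA, hAA⟩ B ⟨hB, hBB⟩ hAB
    have hc : ∀ i j, _ := fun i j => congrFun (congrFun hAB i) j
    simp only [Matrix.of_apply] at hc
    funext k
    ext i j
    fin_cases j
    · have := hc i ⟨0, by omega⟩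
      simp at this
      exact ((hAA _ _ i).1.trans this).trans (hBB _ _ i).1
    · have := hc i ⟨1, by omega⟩
      simp at this
      exact ((hAA _ _ i).2.trans this).trans (hBB _ _ i).2
    · have := hc i ⟨k.val + 2, by omega⟩
      simpa using this
  · rintro c ⟨hc0, hc1, hc2, hc3⟩
    rw [rank_two_iff_aux _ _ _ hc3] at hc2
    refine ⟨fun k => Matrix.of fun i => ![c i ⟨0, by omega⟩, c i ⟨1, by omega⟩,
      c i ⟨k.val + 2, by omega⟩], ⟨?_, ?_⟩, ?_⟩
    · intro k
      refine ⟨?_, ?_, ?_, ?_⟩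
      · intro i j
        fin_cases j
        · simpa using hc0 i ⟨0, by omega⟩
        · simpa using hc0 i ⟨1, by omega⟩
        · simpa using hc0 i ⟨k.val + 2, by omega⟩
      · intro j
        fin_cases j
        · simpa using hc1 ⟨0, by omega⟩
        · simpa using hc1 ⟨1, by omega⟩
        · simpa using hc1 ⟨k.val + 2, by omega⟩
      · refine (rank_two_iff_aux _ 0 1 ?_).2 ?_
        · simpa using hc3
        · intro j
          fin_cases j
          · simpa using hc2 ⟨0, by omega⟩
          · simpa using hc2 ⟨1, by omega⟩
          · simpa using hc2 ⟨k.val + 2, by omega⟩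
      · simpa using hc3
    · intro k k' i
      exact ⟨rfl, rfl⟩
    · ext i j
      simp only [Matrix.of_apply]
      split_ifs with h0 h1
      · exact congrArg (c i) (Fin.ext h0.symm)
      · exact congrArg (c i) (Fin.ext h1.symm)
      · exact congrArg (c i) (Fin.ext (show j.val - 2 + 2 = j.val by omega))
end

section
/- Let m ≥ 2 and let b₁, b₂ ∈ ℂ^m be vectors all of whose entries are nonzero and whose entry sums both equal 1, with b₁ ≠ b₂. Suppose there exists c ∈ ℂ such that b₁ᵢ = c·b₂ᵢ for every index i with b₁ᵢ ≠ b₂ᵢ. Then Σ_{i : b₁ᵢ ≠ b₂ᵢ} b₁ᵢ = 0 and Σ_{i : b₁ᵢ ≠ b₂ᵢ} b₂ᵢ = 0. -/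
open scoped Classical in
/-- If the entries of `b₁` are proportional (with a single factor `c`) to those of `b₂`
at every index where they differ, then the entries of `b₁` (resp. `b₂`) over the indices
where the vectors differ sum to `0`. -/
theorem sum_over_differing_indices_eq_zero (m : ℕ) (hm : 2 ≤ m) (b₁ b₂ : Fin m → ℂ)
    (hb₁0 : ∀ i, b₁ i ≠ 0) (hb₂0 : ∀ i, b₂ i ≠ 0)
    (hb₁s : ∑ i, b₁ i = 1) (hb₂s : ∑ i, b₂ i = 1)
    (hne : b₁ ≠ b₂)
    (hc : ∃ c : ℂ, ∀ i, b₁ i ≠ b₂ i → b₁ i = c * b₂ i) :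
    (∑ i ∈ Finset.univ.filter fun i => b₁ i ≠ b₂ i, b₁ i) = 0 ∧
    (∑ i ∈ Finset.univ.filter fun i => b₁ i ≠ b₂ i, b₂ i) = 0 := by
  obtain ⟨c, hc⟩ := hc
  obtain ⟨j, hj⟩ := Function.ne_iff.mp hne
  have hc1 : c ≠ 1 := by
    intro h
    apply hj
    have := hc j hj
    rwa [h, one_mul] at this
  have h1 : (∑ i ∈ Finset.univ.filter fun i => b₁ i ≠ b₂ i, b₁ i)
      = c * ∑ i ∈ Finset.univ.filter fun i => b₁ i ≠ b₂ i, b₂ i := by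
    rw [Finset.mul_sum]
    exact Finset.sum_congr rfl fun i hi => hc i (Finset.mem_filter.mp hi).2
  have h2 : (∑ i ∈ Finset.univ.filter fun i => ¬ b₁ i ≠ b₂ i, b₁ i)
      = ∑ i ∈ Finset.univ.filter fun i => ¬ b₁ i ≠ b₂ i, b₂ i :=
    Finset.sum_congr rfl fun i hi => not_not.mp (Finset.mem_filter.mp hi).2
  have e1 := Finset.sum_filter_add_sum_filter_not Finset.univ (fun i => b₁ i ≠ b₂ i) b₁
  have e2 := Finset.sum_filter_add_sum_filter_not Finset.univ (fun i => b₁ i ≠ b₂ i) b₂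
  rw [hb₁s, h2] at e1
  rw [hb₂s] at e2
  have h3 : (∑ i ∈ Finset.univ.filter fun i => b₁ i ≠ b₂ i, b₁ i)
      = ∑ i ∈ Finset.univ.filter fun i => b₁ i ≠ b₂ i, b₂ i :=
    add_right_cancel (e1.trans e2.symm)
  have h4 : (∑ i ∈ Finset.univ.filter fun i => b₁ i ≠ b₂ i, b₂ i) = 0 := by
    have h5 : (c - 1) * (∑ i ∈ Finset.univ.filter fun i => b₁ i ≠ b₂ i, b₂ i) = 0 := by
      rw [sub_mul, one_mul, ← h1, h3, sub_self]
    exact (mul_eq_zero.mp h5).resolve_left (sub_ne_zero.mpr hc1)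
  exact ⟨h3.trans h4, h4⟩
end

section
/- Let m ≥ 2 and let W₂^{(0)} denote the set of pairs (b₁, b₂) of vectors in ℂ^m all of whose entries are nonzero, whose entry sums both equal 1, which are linearly independent over ℂ, and for which there exists c ∈ ℂ with b₁ᵢ = c·b₂ᵢ for every index i with b₁ᵢ ≠ b₂ᵢ. For t ∈ ℂ with t ≠ 0, define t·(b₁, b₂) to be the pair (b₁′, b₂′) where b₁′ᵢ = b₁ᵢ and b₂′ᵢ = b₂ᵢ if b₁ᵢ = b₂ᵢ, and b₁′ᵢ = t·b₁ᵢ and b₂′ᵢ = t·b₂ᵢ otherwise. Then t·(b₁, b₂) ∈ W₂^{(0)}, and if t·(b₁, b₂) = (b₁, b₂) then t = 1. -/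
open scoped Classical in
/-- The `ℂ*`-action on the stratum `W₂⁽⁰⁾` that rescales exactly the coordinates at
which the two vectors differ: it preserves `W₂⁽⁰⁾` and has no fixed points other than
for `t = 1`. -/
theorem torus_action_on_W2_zero_stratum (m : ℕ) (hm : 2 ≤ m)
    (W20 : Set ((Fin m → ℂ) × (Fin m → ℂ)))
    (hW20 : W20 = {p : (Fin m → ℂ) × (Fin m → ℂ) |
      (∀ i, p.1 i ≠ 0) ∧ (∀ i, p.2 i ≠ 0) ∧
      (∑ i, p.1 i = 1) ∧ (∑ i, p.2 i = 1) ∧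
      LinearIndependent ℂ ![p.1, p.2] ∧
      ∃ c : ℂ, ∀ i, p.1 i ≠ p.2 i → p.1 i = c * p.2 i})
    (b₁ b₂ : Fin m → ℂ) (hb : (b₁, b₂) ∈ W20) (t : ℂ) (ht : t ≠ 0)
    (b₁' b₂' : Fin m → ℂ)
    (hb₁' : b₁' = fun i => if b₁ i = b₂ i then b₁ i else t * b₁ i)
    (hb₂' : b₂' = fun i => if b₁ i = b₂ i then b₂ i else t * b₂ i) :
    (b₁', b₂') ∈ W20 ∧ ((b₁', b₂') = (b₁, b₂) → t = 1) := by
  subst hW20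
  obtain ⟨h1, h2, s1, s2, hl, c, hc⟩ := hb
  dsimp only at h1 h2 s1 s2 hl hc
  have hne : ∃ i, b₁ i ≠ b₂ i := by
    by_contra! h
    have h' : b₁ = b₂ := funext h
    rw [LinearIndependent.pair_iff] at hl
    have := (hl 1 (-1) (by rw [h']; simp)).1
    exact one_ne_zero this
  obtain ⟨j, hj⟩ := hne
  have hc1 : c - 1 ≠ 0 := by
    intro h
    have hc' : c = 1 := by linear_combination h
    have := hc j hj
    rw [hc', one_mul] at this
    exact hj this
  have hd : ∑ i, (if b₁ i = b₂ i then 0 else b₂ i) = 0 := by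
    have h : (c - 1) * ∑ i, (if b₁ i = b₂ i then 0 else b₂ i) = 0 := by
      calc (c - 1) * ∑ i, (if b₁ i = b₂ i then 0 else b₂ i)
          = ∑ i, (b₁ i - b₂ i) := by
            rw [Finset.mul_sum]
            refine Finset.sum_congr rfl fun i _ => ?_
            split_ifs with h
            · rw [h]; ring
            · linear_combination -(hc i h)
        _ = 0 := by rw [Finset.sum_sub_distrib, s1, s2, sub_self]
    exact (mul_eq_zero.mp h).resolve_left hc1
  have e1 : ∀ i, b₁' i = b₁ i + (t - 1) * c * (if b₁ i = b₂ i then 0 else b₂ i) := by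
    intro i
    rw [hb₁']
    dsimp only
    split_ifs with h
    · ring
    · linear_combination (t - 1) * hc i h
  have e2 : ∀ i, b₂' i = b₂ i + (t - 1) * (if b₁ i = b₂ i then 0 else b₂ i) := by
    intro i
    rw [hb₂']
    dsimp only
    split_ifs with h
    · ring
    · ring
  refine ⟨⟨?_, ?_, ?_, ?_, ?_, c, ?_⟩, ?_⟩
  · intro i
    simp only [hb₁']
    split_ifs
    · exact h1 i
    · exact mul_ne_zero ht (h1 i)
  · intro i
    simp only [hb₂']
    split_ifs
    · exact h2 i
    · exact mul_ne_zero ht (h2 i)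
  · dsimp only
    rw [Finset.sum_congr rfl fun i _ => e1 i, Finset.sum_add_distrib, ← Finset.mul_sum, hd, s1]
    ring
  · dsimp only
    rw [Finset.sum_congr rfl fun i _ => e2 i, Finset.sum_add_distrib, ← Finset.mul_sum, hd, s2]
    ring
  · dsimp only
    rw [LinearIndependent.pair_iff] at hl ⊢
    intro x y hxy
    apply hl x y
    funext i
    have := congrFun hxy i
    simp only [hb₁', hb₂', Pi.add_apply, Pi.smul_apply, smul_eq_mul, Pi.zero_apply] at this ⊢
    split_ifs at this with h
    · exact this
    · apply mul_left_cancel₀ ht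
      linear_combination this
  · intro i
    simp only [hb₁', hb₂']
    split_ifs with h
    · intro h'
      exact absurd h h'
    · intro _
      linear_combination t * hc i h
  · intro h
    have h' := congrFun (Prod.mk.inj h).1 j
    simp only [hb₁', if_neg hj] at h'
    exact mul_right_cancel₀ (h1 j) (by rw [h', one_mul])
end

section
/- Let m ≥ 2 and let r₁, …, r_m ∈ ℂ be pairwise distinct complex numbers with rᵢ ∉ {0, 1} for every i. Then: (i) there exists b ∈ ℂ^m with all entries nonzero such that Σᵢ bᵢ = 1 and Σᵢ rᵢ·bᵢ = 1; (ii) for every such b, the pair of vectors ((rᵢ·bᵢ)ᵢ, (bᵢ)ᵢ) lies in W₂^{(m−1)}; and (iii) the map b ↦ ((rᵢ·bᵢ)ᵢ, (bᵢ)ᵢ) is a bijection from {b ∈ ℂ^m : all bᵢ ≠ 0, Σᵢ bᵢ = 1, Σᵢ rᵢ·bᵢ = 1} onto the set of pairs (b₁, b₂) ∈ W₂^{(m−1)} with b₁ᵢ/b₂ᵢ = rᵢ for all i. Consequently, the ratio map (b₁, b₂) ↦ (b₁ᵢ/b₂ᵢ)ᵢ from W₂^{(m−1)} onto {r ∈ ℂ^m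 : the rᵢ are pairwise distinct and every rᵢ ∉ {0,1}} is surjective. -/
theorem W2_aux_exists (n : ℕ) (r : Fin (n + 2) → ℂ)
    (hr_inj : Function.Injective r) (hr1 : ∀ i, r i ≠ 1) :
    ∃ b : Fin (n + 2) → ℂ, (∀ i, b i ≠ 0) ∧ (∑ i, b i = 1) ∧ ∑ i, r i * b i = 1 := by
  set S : ℂ := ∑ i : Fin n, r i.succ.succ with hS
  have h01 : r 1 - r 0 ≠ 0 := by
    intro h
    have := hr_inj (sub_eq_zero.mp h)
    simp at this
  have ha : r 0 - 1 ≠ 0 := sub_ne_zero.mpr (hr1 0)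
  have hb : r 1 - 1 ≠ 0 := sub_ne_zero.mpr (hr1 1)
  obtain ⟨t, ht⟩ := Infinite.exists_notMem_finset
    ({0, (r 0 - 1) / (n * r 0 - S), (r 1 - 1) / (n * r 1 - S)} : Finset ℂ)
  simp only [Finset.mem_insert, Finset.mem_singleton, not_or] at ht
  obtain ⟨ht0, hta, htb⟩ := ht
  have key : ∀ c d : ℂ, c ≠ 0 → t ≠ c / d → t * d - c ≠ 0 := by
    intro c d hc h h2
    have hd : d ≠ 0 := by
      rintro rfl
      apply hc
      linear_combination -h2
    exact h (by rw [eq_div_iff hd]; linear_combination h2)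
  have ka := key _ _ ha hta
  have kb := key _ _ hb htb
  refine ⟨Fin.cons (-(t * (n * r 1 - S) - (r 1 - 1)) / (r 1 - r 0))
    (Fin.cons ((t * (n * r 0 - S) - (r 0 - 1)) / (r 1 - r 0)) (fun _ => t)), ?_, ?_, ?_⟩
  · intro i
    refine Fin.cases ?_ (fun j => ?_) i
    · exact div_ne_zero (neg_ne_zero.mpr kb) h01
    · refine Fin.cases ?_ (fun k => ?_) j
      · exact div_ne_zero ka h01
      · exact ht0
  · simp only [Fin.sum_univ_succ, Fin.cons_zero, Fin.cons_succ, Finset.sum_const,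
      Finset.card_univ, Fintype.card_fin, nsmul_eq_mul]
    field_simp
    ring
  · simp only [Fin.sum_univ_succ (n := n + 1), Fin.sum_univ_succ (n := n), Fin.cons_zero,
      Fin.cons_succ, ← Finset.sum_mul, ← hS, Fin.succ_zero_eq_one]
    field_simp
    ring

/-- Fiber-bundle description of `W₂⁽ᵐ⁻¹⁾` over the configuration space `B_m`: for
pairwise distinct `r₁, …, r_m ∉ {0,1}`, the fiber of the ratio map over `r` is the
(nonempty) set `{b : all bᵢ ≠ 0, Σ bᵢ = 1, Σ rᵢ bᵢ = 1}` via `b ↦ ((rᵢ bᵢ)ᵢ, b)`;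
in particular the ratio map `W₂⁽ᵐ⁻¹⁾ → B_m` is surjective. -/
theorem W2_top_stratum_fiber_bundle (m : ℕ) (hm : 2 ≤ m) (r : Fin m → ℂ)
    (hr_inj : Function.Injective r) (hr0 : ∀ i, r i ≠ 0) (hr1 : ∀ i, r i ≠ 1)
    (W2top : Set ((Fin m → ℂ) × (Fin m → ℂ)))
    (hW2top : W2top = {p : (Fin m → ℂ) × (Fin m → ℂ) |
      (∀ i, p.1 i ≠ 0) ∧ (∀ i, p.2 i ≠ 0) ∧
      (∑ i, p.1 i = 1) ∧ (∑ i, p.2 i = 1) ∧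
      Function.Injective (fun i => p.1 i / p.2 i) ∧
      ∀ i, p.1 i / p.2 i ≠ 1})
    (B : Set (Fin m → ℂ))
    (hB : B = {b : Fin m → ℂ | (∀ i, b i ≠ 0) ∧
      (∑ i, b i = 1) ∧ ∑ i, r i * b i = 1}) :
    B.Nonempty ∧
    (∀ b ∈ B, ((fun i => r i * b i, b) : (Fin m → ℂ) × (Fin m → ℂ)) ∈ W2top) ∧
    Set.BijOn (fun b : Fin m → ℂ => ((fun i => r i * b i, b) : (Fin m → ℂ) × (Fin m → ℂ)))
      B {p ∈ W2top | ∀ i, p.1 i / p.2 i = r i} ∧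
    (∃ p ∈ W2top, ∀ i, p.1 i / p.2 i = r i) := by
  have hne : B.Nonempty := by
    obtain ⟨n, rfl⟩ : ∃ n, m = n + 2 := ⟨m - 2, by omega⟩
    obtain ⟨b, hb⟩ := W2_aux_exists n r hr_inj hr1
    exact ⟨b, by rw [hB]; exact hb⟩
  have hmem : ∀ b ∈ B, ((fun i => r i * b i, b) : (Fin m → ℂ) × (Fin m → ℂ)) ∈ W2top ∧
      ∀ i, r i * b i / b i = r i := by
    intro b hb
    rw [hB] at hb
    obtain ⟨h0, h1, h2⟩ := hb
    have hq : ∀ i, r i * b i / b i = r i := fun i => mul_div_cancel_right₀ _ (h0 i)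
    refine ⟨?_, hq⟩
    rw [hW2top]
    refine ⟨fun i => mul_ne_zero (hr0 i) (h0 i), h0, h2, h1, ?_, fun i => ?_⟩
    · intro i j hij
      simp only [hq] at hij
      exact hr_inj hij
    · simp only [hq]
      exact hr1 i
  refine ⟨hne, fun b hb => (hmem b hb).1, ⟨fun b hb => hmem b hb, ?_, ?_⟩, ?_⟩
  · intro b _ c _ h
    exact congrArg Prod.snd h
  · rintro ⟨p, q⟩ ⟨hp, hpq⟩
    rw [hW2top] at hp
    obtain ⟨_, hq0, hp1, hq1, _, _⟩ := hp
    have he : (fun i => r i * q i) = p := by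
      funext i
      rw [← hpq i]
      exact div_mul_cancel₀ _ (hq0 i)
    refine ⟨q, ?_, by simp only [he]⟩
    rw [hB]
    refine ⟨hq0, hq1, ?_⟩
    have : ∑ i, r i * q i = ∑ i, p i := by rw [← he]
    rw [this]
    exact hp1
  · obtain ⟨b, hb⟩ := hne
    exact ⟨_, (hmem b hb).1, (hmem b hb).2⟩
end

section
/- Let u₀, u₁, u₂, u₃ ∈ ℂ satisfy (u₀+u₁)(u₀+u₂)(u₁+u₃)(u₂+u₃)(u₀+u₁+u₂+u₃) ≠ 0, and set u_s = −(u₀+u₁+u₂+u₃). Define p₀ = (u₀+u₁)(u₀+u₂), p₁ = (u₀+u₁)(u₁+u₃), p₂ = (u₂+u₃)(u₀+u₂), p₃ = (u₂+u₃)(u₁+u₃), and p_s = (u₀+u₁+u₂+u₃)². Then: (i) all of p₀, p₁, p₂, p₃, p_s are nonzero; (ii) p₀·p₃ = p₁·p₂; (iii) p₀ + p₁ + p₂ + p₃ = p_s; and (iv) there exist λ, μ ∈ ℂ such that the vector (u₀/p₀, u₁/p₁, u₂/p₂, u₃/p₃, u_s/p_s) equals λ·(p₃, −p₂, −p₁,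 p₀, 0) + μ·(1, 1, 1, 1, −1). -/
/-- The explicit critical point of the likelihood function on the `2 × 2` independence
model: the point `p` defined below has nonzero coordinates, lies on the variety
`p₀p₃ = p₁p₂`, `p₀+p₁+p₂+p₃ = p_s`, and the scaled gradient `(u₀/p₀, …, u_s/p_s)` lies
in the row span of the Jacobian of the defining equations. -/
theorem critical_point_2x2_independence (u₀ u₁ u₂ u₃ : ℂ)
    (hu : (u₀ + u₁) * (u₀ + u₂) * (u₁ + u₃) * (u₂ + u₃) * (u₀ + u₁ + u₂ + u₃) ≠ 0)
    (us p₀ p₁ p₂ p₃ ps : ℂ)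
    (hus : us = -(u₀ + u₁ + u₂ + u₃))
    (hp₀ : p₀ = (u₀ + u₁) * (u₀ + u₂))
    (hp₁ : p₁ = (u₀ + u₁) * (u₁ + u₃))
    (hp₂ : p₂ = (u₂ + u₃) * (u₀ + u₂))
    (hp₃ : p₃ = (u₂ + u₃) * (u₁ + u₃))
    (hps : ps = (u₀ + u₁ + u₂ + u₃) ^ 2) :
    (p₀ ≠ 0 ∧ p₁ ≠ 0 ∧ p₂ ≠ 0 ∧ p₃ ≠ 0 ∧ ps ≠ 0) ∧
    p₀ * p₃ = p₁ * p₂ ∧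
    p₀ + p₁ + p₂ + p₃ = ps ∧
    ∃ lam mu : ℂ,
      (![u₀ / p₀, u₁ / p₁, u₂ / p₂, u₃ / p₃, us / ps] : Fin 5 → ℂ) =
        lam • ![p₃, -p₂, -p₁, p₀, 0] + mu • ![1, 1, 1, 1, -1] := by
  have ha : u₀ + u₁ ≠ 0 := by rintro h; simp [h] at hu
  have hb : u₀ + u₂ ≠ 0 := by rintro h; simp [h] at hu
  have hc : u₁ + u₃ ≠ 0 := by rintro h; simp [h] at hu
  have hd : u₂ + u₃ ≠ 0 := by rintro h; simp [h] at hu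
  have hs : u₀ + u₁ + u₂ + u₃ ≠ 0 := by rintro h; simp [h] at hu
  subst hus hp₀ hp₁ hp₂ hp₃ hps
  refine ⟨⟨mul_ne_zero ha hb, mul_ne_zero ha hc, mul_ne_zero hd hb, mul_ne_zero hd hc,
    pow_ne_zero 2 hs⟩, by ring, by ring,
    (u₀ * u₃ - u₁ * u₂) / ((u₀ + u₁) * (u₀ + u₂) * ((u₂ + u₃) * (u₁ + u₃))
      * (u₀ + u₁ + u₂ + u₃)), 1 / (u₀ + u₁ + u₂ + u₃), ?_⟩
  ext i
  fin_cases i <;> simp <;> field_simp <;> ring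
end
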